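/- Let K be an algebraically closed field of characteristic 0 and, for d, e ∈ K with d ≠ 0 and e ≠ 0, let f_{d,e} : K³ → K³ be the polynomial map f_{d,e}(X,Y,Z) = (X² + Y² − Z², dXY, eXZ). Then: (i) if d ≠ e, Aut(f_{d,e}) is exactly the group 𝒢₂,₂ = {[diag(1,ε₁,ε₂)] : ε₁, ε₂ ∈ {1,−1}} of order 4, isomorphic to C₂ × C₂; (ii) if d = e, Aut(f_{d,e}) is exactly the set of classes of matrices of the two shapes [[1,0,0],[0,α,β],[0,β,α]] and [[1,0,0],[0,α,β],[0,−β,−α]] with α² − β² = 1, a group isomorphic to the semidirect product Kˣ ⋊ C₂; (iii) for d', e' ∈ K nonzero, the triples f_{d,e} and f_{d',e'} are PGL₃(K)-conjugate if and only if {d,e} = {d',e'} as unordered pairs. -/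

import Mathlib

open Matrix MvPolynomial
open scoped Classical

noncomputable section

/-- `PGL₃(K)`: the quotient of `GL₃(K)` by its center (the nonzero scalar matrices). -/
abbrev PGL3 (K : Type*) [Field K] : Type _ :=
  GL (Fin 3) K ⧸ Subgroup.center (GL (Fin 3) K)

/-- The class in `PGL₃(K)` of a matrix (sent to `1` if the matrix is not invertible). -/
def toPGL3 {K : Type*} [Field K] (M : Matrix (Fin 3) (Fin 3) K) : PGL3 K :=
  if h : M.det ≠ 0 then
    QuotientGroup.mk (Matrix.GeneralLinearGroup.mkOfDetNeZero M h) else 1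

/-- The automorphism group (as a set of classes in `PGL₃(K)`) of a polynomial self-map
`F` of `K³`: the classes `[M]` such that `F(M·v) = c·M·F(v)` for some `c ≠ 0` and all `v`. -/
def AutQ {K : Type*} [Field K] (F : (Fin 3 → K) → (Fin 3 → K)) : Set (PGL3 K) :=
  {φ | ∃ M : GL (Fin 3) K, (QuotientGroup.mk M : PGL3 K) = φ ∧
    ∃ c : K, c ≠ 0 ∧ ∀ v : Fin 3 → K,
      F ((M : Matrix (Fin 3) (Fin 3) K) *ᵥ v) = c • ((M : Matrix (Fin 3) (Fin 3) K) *ᵥ F v)}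

/-- Two polynomial self-maps of `K³` are `PGL₃(K)`-conjugate. -/
def PGLConj {K : Type*} [Field K] (F F' : (Fin 3 → K) → (Fin 3 → K)) : Prop :=
  ∃ (M : Matrix (Fin 3) (Fin 3) K) (c : K), M.det ≠ 0 ∧ c ≠ 0 ∧
    ∀ v : Fin 3 → K, F (M *ᵥ v) = c • (M *ᵥ F' v)

/-- The `n`-fold composite of the polynomial self-map of `K³` whose coordinates are the
polynomials `P 0, P 1, P 2`, as a triple of polynomials (the `0`-th iterate is the identity). -/
def iterComp {K : Type*} [CommSemiring K] (P : Fin 3 → MvPolynomial (Fin 3) K) :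
    ℕ → Fin 3 → MvPolynomial (Fin 3) K
  | 0 => fun i => MvPolynomial.X i
  | n + 1 => fun i => MvPolynomial.aeval (iterComp P n) (P i)

lemma mk_eq_toPGL3 {K : Type*} [Field K] (M : GL (Fin 3) K) (N : Matrix (Fin 3) (Fin 3) K)
    (a : K) (ha : a ≠ 0) (h : (M : Matrix (Fin 3) (Fin 3) K) = a • N) :
    (QuotientGroup.mk M : PGL3 K) = toPGL3 N := by
  have hM : (M : Matrix (Fin 3) (Fin 3) K).det ≠ 0 := by
    have := M.isUnit
    exact ((Matrix.isUnit_iff_isUnit_det _).1 this).ne_zero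
  have hN : N.det ≠ 0 := by
    intro h0
    apply hM
    rw [h, Matrix.det_smul, h0, mul_zero]
  rw [toPGL3, dif_pos hN]
  symm
  rw [QuotientGroup.eq, Matrix.GeneralLinearGroup.mem_center_iff_val_mem_range_scalar]
  refine ⟨a, ?_⟩
  rw [Units.val_mul, h, Matrix.mul_smul]
  have : ((Matrix.GeneralLinearGroup.mkOfDetNeZero N hN)⁻¹ : GL (Fin 3) K).val * N = 1 :=
    (Matrix.GeneralLinearGroup.mkOfDetNeZero N hN).inv_mul
  rw [this, Matrix.smul_one_eq_diagonal]
  rfl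

lemma toPGL3_eq {K : Type*} [Field K] (N : Matrix (Fin 3) (Fin 3) K) (h : N.det ≠ 0) :
    (QuotientGroup.mk (Matrix.GeneralLinearGroup.mkOfDetNeZero N h) : PGL3 K) = toPGL3 N := by
  rw [toPGL3, dif_pos h]

/-- The family of maps. -/
def fde {K : Type*} [Field K] (d e : K) (v : Fin 3 → K) : Fin 3 → K :=
  ![v 0 ^ 2 + v 1 ^ 2 - v 2 ^ 2, d * (v 0 * v 1), e * (v 0 * v 2)]

/-- Matrix fixing the splitting with first block `a`. -/
def blockM {K : Type*} [Field K] (a q r t u : K) : Matrix (Fin 3) (Fin 3) K :=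
  !![a, 0, 0; 0, q, r; 0, t, u]

lemma det_blockM {K : Type*} [Field K] (a q r t u : K) :
    (blockM a q r t u).det = a * (q * u - r * t) := by
  simp [blockM, Matrix.det_fin_three]; ring

lemma semiconj_of {K : Type*} [Field K] (d e d' e' a q r t u : K)
    (h1 : q ^ 2 - t ^ 2 = a ^ 2) (h2 : u ^ 2 - r ^ 2 = a ^ 2) (h3 : q * r = t * u)
    (h4 : d * q = d' * q) (h5 : d * r = e' * r) (h6 : e * t = d' * t) (h7 : e * u = e' * u)
    (v : Fin 3 → K) :
    fde d e (blockM a q r t u *ᵥ v) = a • (blockM a q r t u *ᵥ fde d' e' v) := by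
  ext i
  fin_cases i <;>
    simp [fde, blockM, Matrix.mulVec, dotProduct, Fin.sum_univ_three]
  · linear_combination (v 1)^2 * h1 - (v 2)^2 * h2 + 2 * v 1 * v 2 * h3
  · linear_combination a * v 0 * v 1 * h4 + a * v 0 * v 2 * h5
  · linear_combination a * v 0 * v 1 * h6 + a * v 0 * v 2 * h7

lemma of_semiconj {K : Type*} [Field K] [CharZero K] (d e d' e' : K) (hd : d ≠ 0) (he : e ≠ 0)
    (M : Matrix (Fin 3) (Fin 3) K) (hM : M.det ≠ 0) (c : K) (hc : c ≠ 0)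
    (H : ∀ v, fde d e (M *ᵥ v) = c • (M *ᵥ fde d' e' v)) :
    ∃ a q r t u : K, a ≠ 0 ∧ M = blockM a q r t u ∧ q ^ 2 - t ^ 2 = a ^ 2 ∧
      u ^ 2 - r ^ 2 = a ^ 2 ∧ q * r = t * u ∧ d * q = d' * q ∧ d * r = e' * r ∧
      e * t = d' * t ∧ e * u = e' * u := by
  have base : ∀ v, fde d' e' v = 0 → (M *ᵥ v) 0 = 0 := by
    intro v hv
    have h := H v
    rw [hv, Matrix.mulVec_zero, smul_zero] at h
    have h0 := congrFun h 0
    have h1 := congrFun h 1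
    have h2 := congrFun h 2
    simp only [fde, Matrix.cons_val, Pi.zero_apply] at h0 h1 h2
    by_contra hne
    have e1 : (M *ᵥ v) 1 = 0 := by simpa [hd, hne] using h1
    have e2 : (M *ᵥ v) 2 = 0 := by simpa [he, hne] using h2
    rw [e1, e2] at h0
    apply hne
    simpa using h0
  have b1 := base ![0, 1, 1] (by ext i; fin_cases i <;> simp [fde])
  have b2 := base ![0, 1, -1] (by ext i; fin_cases i <;> simp [fde])
  simp [Matrix.mulVec, dotProduct, Fin.sum_univ_three] at b1 b2
  have m01 : M 0 1 = 0 := by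
    have : (2 : K) * M 0 1 = 0 := by linear_combination b1 + b2
    simpa using this
  have m02 : M 0 2 = 0 := by simpa [m01] using b1
  have hy := H ![0, 1, 0]
  have hy1 := congrFun hy 1
  have hy2 := congrFun hy 2
  simp [fde, Matrix.mulVec, dotProduct, Fin.sum_univ_three, m01, hc] at hy1 hy2
  have ha : M 0 0 ≠ 0 := by
    intro h
    apply hM
    rw [Matrix.det_fin_three]
    simp [h, m01, m02]
  have hMe : M = blockM (M 0 0) (M 1 1) (M 1 2) (M 2 1) (M 2 2) := by
    ext i j
    fin_cases i <;> fin_cases j <;> simp [blockM, m01, m02, hy1, hy2]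
  generalize M 0 0 = a, M 1 1 = q, M 1 2 = r, M 2 1 = t, M 2 2 = u at ha hMe
  subst hMe
  clear base b1 b2 m01 m02 hy1 hy2 hM
  refine ⟨a, q, r, t, u, ha, rfl, ?_⟩
  have hca : c = a := by
    have := congrFun (H ![1, 0, 0]) 0
    simp [fde, blockM, Matrix.mulVec, dotProduct, Fin.sum_univ_three] at this
    apply mul_right_cancel₀ ha
    rw [← this]; ring
  subst hca
  have k1 := congrFun (H ![0, 1, 0]) 0
  have k2 := congrFun (H ![0, 0, 1]) 0
  have k3 := congrFun (H ![0, 1, 1]) 0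
  have k4 := congrFun (H ![1, 1, 0]) 1
  have k5 := congrFun (H ![1, 0, 1]) 1
  have k6 := congrFun (H ![1, 1, 0]) 2
  have k7 := congrFun (H ![1, 0, 1]) 2
  simp [fde, blockM, Matrix.mulVec, dotProduct, Fin.sum_univ_three, -mul_eq_mul_left_iff, -mul_eq_mul_right_iff] at k1 k2 k3 k4 k5 k6 k7
  refine ⟨?_, ?_, ?_, ?_, ?_, ?_, ?_⟩
  · linear_combination k1
  · linear_combination -k2
  · have : (2 : K) * (q * r) = 2 * (t * u) := by linear_combination k3 - k1 - k2
    exact mul_left_cancel₀ two_ne_zero this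
  · apply mul_left_cancel₀ hc; linear_combination k4
  · apply mul_left_cancel₀ hc; linear_combination k5
  · apply mul_left_cancel₀ hc; linear_combination k6
  · apply mul_left_cancel₀ hc; linear_combination k7

lemma autQ_iff {K : Type*} [Field K] [CharZero K] (d e : K) (hd : d ≠ 0) (he : e ≠ 0)
    (x : PGL3 K) : x ∈ AutQ (fde d e) ↔ ∃ q r t u : K, q ^ 2 - t ^ 2 = 1 ∧
      u ^ 2 - r ^ 2 = 1 ∧ q * r = t * u ∧ d * r = e * r ∧
      e * t = d * t ∧ x = toPGL3 (blockM 1 q r t u) := by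
  constructor
  · rintro ⟨M, rfl, c, hc, H⟩
    have hM : (M : Matrix (Fin 3) (Fin 3) K).det ≠ 0 :=
      ((Matrix.isUnit_iff_isUnit_det _).1 M.isUnit).ne_zero
    obtain ⟨a, q, r, t, u, ha, hMe, h1, h2, h3, -, h5, h6, -⟩ :=
      of_semiconj d e d e hd he M.val hM c hc H
    refine ⟨q / a, r / a, t / a, u / a, ?_, ?_, ?_, ?_, ?_, ?_⟩
    · field_simp; exact h1
    · field_simp; exact h2
    · field_simp; exact h3
    · rw [← mul_div_assoc, h5, mul_div_assoc]
    · rw [← mul_div_assoc, h6, mul_div_assoc]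
    · apply mk_eq_toPGL3 M _ a ha
      rw [hMe]
      ext i j
      fin_cases i <;> fin_cases j <;> simp [blockM] <;> field_simp
  · rintro ⟨q, r, t, u, h1, h2, h3, h5, h6, rfl⟩
    have hdet : (blockM 1 q r t u).det ≠ 0 := by
      rw [det_blockM]
      intro h
      have : (1 : K) = 0 := by
        linear_combination (q * u - r * t) * h - (q * r - t * u) * h3 - (u ^ 2 - r ^ 2) * h1 - h2
      exact one_ne_zero this
    refine ⟨_, toPGL3_eq _ hdet, 1, one_ne_zero, ?_⟩
    exact semiconj_of d e d e 1 q r t u (by simpa using h1) (by simpa using h2) h3 rfl h5 h6 rfl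

/-- Homomorphism out of the group of order two. -/
def c2hom {G : Type*} [Group G] (s : G) (hs : s * s = 1) : Multiplicative (ZMod 2) →* G where
  toFun z := if z = 1 then 1 else s
  map_one' := by simp
  map_mul' := by
    have key : ∀ z : Multiplicative (ZMod 2), z = 1 ∨ z = Multiplicative.ofAdd 1 := by decide
    have h1 : (Multiplicative.ofAdd 1 : Multiplicative (ZMod 2)) ≠ 1 := by decide
    have h2 : (Multiplicative.ofAdd 1 * Multiplicative.ofAdd 1 : Multiplicative (ZMod 2)) = 1 := by
      decide
    intro a b
    rcases key a with rfl | rfl <;> rcases key b with rfl | rfl <;> simp [h1, h2, hs]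

/-- The hyperbolic rotation. -/
def hyp {K : Type*} [Field K] (l : Kˣ) : Matrix (Fin 3) (Fin 3) K :=
  blockM 1 (((l : K) + (l : K)⁻¹) / 2) (((l : K) - (l : K)⁻¹) / 2)
    (((l : K) - (l : K)⁻¹) / 2) (((l : K) + (l : K)⁻¹) / 2)

lemma hyp_mul {K : Type*} [Field K] [CharZero K] (l m : Kˣ) : hyp l * hyp m = hyp (l * m) := by
  have hl := l.ne_zero
  have hm := m.ne_zero
  ext i j
  fin_cases i <;> fin_cases j <;>
    simp [hyp, blockM, Matrix.mul_apply, Fin.sum_univ_three] <;> field_simp <;> ring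

lemma hyp_one {K : Type*} [Field K] [CharZero K] : hyp (1 : Kˣ) = 1 := by
  ext i j
  fin_cases i <;> fin_cases j <;> simp [hyp, blockM] 

/-- The hyperbolic torus in `GL₃`. -/
def hypHom {K : Type*} [Field K] [CharZero K] : Kˣ →* GL (Fin 3) K where
  toFun l := ⟨hyp l, hyp l⁻¹, by rw [hyp_mul, mul_inv_cancel, hyp_one],
    by rw [hyp_mul, inv_mul_cancel, hyp_one]⟩
  map_one' := Units.ext hyp_one
  map_mul' l m := Units.ext (hyp_mul l m).symm

lemma refl_sq {K : Type*} [Field K] : blockM (1 : K) 1 0 0 (-1) * blockM 1 1 0 0 (-1) = 1 := by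
  ext i j
  fin_cases i <;> fin_cases j <;> simp [blockM, Matrix.mul_apply, Fin.sum_univ_three]

/-- The reflection. -/
def reflGL {K : Type*} [Field K] : GL (Fin 3) K :=
  ⟨blockM 1 1 0 0 (-1), blockM 1 1 0 0 (-1), refl_sq, refl_sq⟩

lemma reflGL_sq {K : Type*} [Field K] : (reflGL : GL (Fin 3) K) * reflGL = 1 := Units.ext refl_sq

lemma conj_refl {K : Type*} [Field K] [CharZero K] (l : Kˣ) :
    (reflGL : GL (Fin 3) K) * hypHom l * reflGL⁻¹ = hypHom l⁻¹ := by
  rw [mul_inv_eq_iff_eq_mul]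
  apply Units.ext
  ext i j
  fin_cases i <;> fin_cases j <;>
    simp [hypHom, reflGL, hyp, blockM, Matrix.mul_apply, Fin.sum_univ_three] <;> ring

/-- Inversion action of the group of order two. -/
def psi (K : Type*) [Field K] : Multiplicative (ZMod 2) →* MulAut Kˣ :=
  c2hom (MulEquiv.inv Kˣ) (by ext x; simp)

lemma c2_cases (z : Multiplicative (ZMod 2)) : z = 1 ∨ z = Multiplicative.ofAdd 1 := by
  revert z; decide

lemma c2hom_ofAdd {G : Type*} [Group G] (s : G) (hs : s * s = 1) :
    c2hom s hs (Multiplicative.ofAdd 1) = s := by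
  have h1 : (Multiplicative.ofAdd 1 : Multiplicative (ZMod 2)) ≠ 1 := by decide
  simp [c2hom, h1]

/-- The semidirect product in `GL₃`. -/
def bigHom (K : Type*) [Field K] [CharZero K] :
    (Kˣ ⋊[psi K] Multiplicative (ZMod 2)) →* GL (Fin 3) K :=
  SemidirectProduct.lift hypHom (c2hom reflGL reflGL_sq) (by
    intro g
    ext1 l
    rcases c2_cases g with rfl | rfl
    · simp
    · simp only [psi, c2hom_ofAdd, MonoidHom.comp_apply, MulEquiv.coe_toMonoidHom,
        MulAut.conj_apply, conj_refl]
      rfl)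

/-- The semidirect product in `PGL₃`. -/
def projHom (K : Type*) [Field K] [CharZero K] :
    (Kˣ ⋊[psi K] Multiplicative (ZMod 2)) →* PGL3 K :=
  (QuotientGroup.mk' _).comp (bigHom K)

lemma bigHom_one {K : Type*} [Field K] [CharZero K] (l : Kˣ) :
    (bigHom K ⟨l, 1⟩).val = hyp l := by
  simp [bigHom, SemidirectProduct.lift, hypHom]

lemma bigHom_two {K : Type*} [Field K] [CharZero K] (l : Kˣ) :
    (bigHom K ⟨l, Multiplicative.ofAdd 1⟩).val =
      blockM 1 (((l : K) + (l : K)⁻¹) / 2) (-(((l : K) - (l : K)⁻¹) / 2))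
        (((l : K) - (l : K)⁻¹) / 2) (-(((l : K) + (l : K)⁻¹) / 2)) := by
  simp only [bigHom, SemidirectProduct.lift, MonoidHom.coe_mk, OneHom.coe_mk, c2hom_ofAdd]
  ext i j
  fin_cases i <;> fin_cases j <;>
    simp [hypHom, reflGL, hyp, blockM, Matrix.mul_apply, Fin.sum_univ_three]

lemma projHom_injective (K : Type*) [Field K] [CharZero K] :
    Function.Injective (projHom K) := by
  rw [injective_iff_map_eq_one]
  rintro ⟨l, z⟩ h
  have hl := l.ne_zero
  have h' : bigHom K ⟨l, z⟩ ∈ Subgroup.center (GL (Fin 3) K) := (QuotientGroup.eq_one_iff _).1 h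
  rw [Matrix.GeneralLinearGroup.mem_center_iff_val_mem_range_scalar] at h'
  obtain ⟨a, ha⟩ := h'
  rcases c2_cases z with rfl | rfl
  · rw [bigHom_one] at ha
    have e0 := congrFun (congrFun ha 0) 0
    have e1 := congrFun (congrFun ha 1) 1
    have e2 := congrFun (congrFun ha 1) 2
    simp [hyp, blockM] at e0 e1 e2
    subst e0
    have : l = 1 := by
      apply Units.ext
      rw [Units.val_one]
      linear_combination (-1 : K) * e1 - e2 
    subst this
    rfl
  · exfalso
    rw [bigHom_two] at ha
    have e0 := congrFun (congrFun ha 0) 0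
    have e1 := congrFun (congrFun ha 1) 1
    have e2 := congrFun (congrFun ha 2) 2
    simp [blockM] at e0 e1 e2
    subst e0
    have : (2 : K) = 0 := by linear_combination e1 + e2
    exact two_ne_zero this

lemma exists_unit {K : Type*} [Field K] [CharZero K] (α β : K) (h : α ^ 2 - β ^ 2 = 1) :
    ∃ l : Kˣ, ((l : K) + (l : K)⁻¹) / 2 = α ∧ ((l : K) - (l : K)⁻¹) / 2 = β := by
  have h0 : (α + β) * (α - β) = 1 := by linear_combination h
  have hi : (α + β)⁻¹ = α - β := inv_eq_of_mul_eq_one_right h0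
  exact ⟨⟨α + β, α - β, h0, by rw [mul_comm]; exact h0⟩, by simp only [hi]; ring,
    by simp only [hi]; ring⟩

lemma unit_rel {K : Type*} [Field K] [CharZero K] (l : Kˣ) :
    (((l : K) + (l : K)⁻¹) / 2) ^ 2 - (((l : K) - (l : K)⁻¹) / 2) ^ 2 = 1 := by
  have hl := l.ne_zero
  field_simp
  ring

lemma aut_eq {K : Type*} [Field K] [CharZero K] (d : K) (hd : d ≠ 0) :
    AutQ (fde d d) = {x | ∃ α β : K, α ^ 2 - β ^ 2 = 1 ∧
          (x = toPGL3 !![1,0,0; 0,α,β; 0,β,α] ∨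
            x = toPGL3 !![1,0,0; 0,α,β; 0,-β,-α])} := by
  ext x
  rw [autQ_iff d d hd hd]
  constructor
  · rintro ⟨q, r, t, u, h1, h2, h3, -, -, rfl⟩
    have hr2 : (r - t) * (r + t) = 0 := by
      linear_combination (q * r + t * u) * h3 - r ^ 2 * h1 + t ^ 2 * h2
    have hq2 : (u - q) * (u + q) = 0 := by linear_combination h2 - h1 + hr2
    have hor : (t = r ∧ u = q) ∨ (t = -r ∧ u = -q) := by
      rcases mul_eq_zero.1 hr2 with h | h <;> rcases mul_eq_zero.1 hq2 with h' | h' <;> grind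
    rcases hor with ⟨rfl, rfl⟩ | ⟨rfl, rfl⟩
    · exact ⟨u, t, h1, Or.inl rfl⟩
    · exact ⟨q, r, by linear_combination h1, Or.inr rfl⟩
  · rintro ⟨α, β, h, rfl | rfl⟩
    · exact ⟨α, β, β, α, h, h, mul_comm _ _, rfl, rfl, rfl⟩
    · exact ⟨α, β, -β, -α, by linear_combination h, by linear_combination h, by ring, rfl, rfl, rfl⟩

lemma range_eq {K : Type*} [Field K] [CharZero K] :
    ((projHom K).range : Set (PGL3 K)) = {x | ∃ α β : K, α ^ 2 - β ^ 2 = 1 ∧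
          (x = toPGL3 !![1,0,0; 0,α,β; 0,β,α] ∨
            x = toPGL3 !![1,0,0; 0,α,β; 0,-β,-α])} := by
  ext x
  constructor
  · rintro ⟨⟨l, z⟩, rfl⟩
    rcases c2_cases z with rfl | rfl
    · refine ⟨_, _, unit_rel l, Or.inl ?_⟩
      apply mk_eq_toPGL3 _ _ 1 one_ne_zero
      rw [bigHom_one, one_smul]; rfl
    · refine ⟨((l : K) + (l : K)⁻¹) / 2, -(((l : K) - (l : K)⁻¹) / 2), ?_, Or.inr ?_⟩
      · rw [neg_sq]; exact unit_rel l
      · apply mk_eq_toPGL3 _ _ 1 one_ne_zero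
        rw [bigHom_two, one_smul, neg_neg]; rfl
  · rintro ⟨α, β, h, rfl | rfl⟩
    · obtain ⟨l, rfl, rfl⟩ := exists_unit α β h
      refine ⟨⟨l, 1⟩, ?_⟩
      apply mk_eq_toPGL3 _ _ 1 one_ne_zero
      rw [bigHom_one, one_smul]; rfl
    · obtain ⟨l, h1, h2⟩ := exists_unit α (-β) (by rw [neg_sq]; exact h)
      refine ⟨⟨l, Multiplicative.ofAdd 1⟩, ?_⟩
      apply mk_eq_toPGL3 _ _ 1 one_ne_zero
      rw [bigHom_two, one_smul, h1, h2, neg_neg]; rfl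

theorem stmt10 {K : Type*} [Field K] [IsAlgClosed K] [CharZero K] :
    let f : K → K → (Fin 3 → K) → (Fin 3 → K) := fun d e v =>
      ![v 0 ^ 2 + v 1 ^ 2 - v 2 ^ 2, d * (v 0 * v 1), e * (v 0 * v 2)]
    (∀ d e : K, d ≠ 0 → e ≠ 0 → d ≠ e →
      AutQ (f d e) =
        {x | ∃ ε₁ ε₂ : K, (ε₁ = 1 ∨ ε₁ = -1) ∧ (ε₂ = 1 ∨ ε₂ = -1) ∧
          x = toPGL3 (Matrix.diagonal ![1, ε₁, ε₂])}) ∧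
    (∀ d e : K, d ≠ 0 → e ≠ 0 → d = e →
      AutQ (f d e) =
        {x | ∃ α β : K, α ^ 2 - β ^ 2 = 1 ∧
          (x = toPGL3 !![1,0,0; 0,α,β; 0,β,α] ∨
            x = toPGL3 !![1,0,0; 0,α,β; 0,-β,-α])} ∧
      ∃ (H : Subgroup (PGL3 K)) (ψ : Multiplicative (ZMod 2) →* MulAut Kˣ),
        (H : Set (PGL3 K)) = AutQ (f d e) ∧
        Nonempty (H ≃* (Kˣ ⋊[ψ] Multiplicative (ZMod 2)))) ∧
    (∀ d e d' e' : K, d ≠ 0 → e ≠ 0 → d' ≠ 0 → e' ≠ 0 →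
      (PGLConj (f d e) (f d' e') ↔ (d = d' ∧ e = e') ∨ (d = e' ∧ e = d'))) := by
  intro f
  have hf : f = fde := rfl
  clear_value f
  subst hf
  refine ⟨?_, ?_, ?_⟩
  · intro d e hd he hde
    ext x
    rw [autQ_iff d e hd he]
    constructor
    · rintro ⟨q, r, t, u, h1, h2, -, h5, h6, rfl⟩
      have hr : r = 0 := by
        by_contra h
        exact hde (mul_right_cancel₀ h h5)
      have ht : t = 0 := by
        by_contra h
        exact hde (mul_right_cancel₀ h h6).symm
      subst hr ht
      refine ⟨q, u, ?_, ?_, ?_⟩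
      · exact eq_or_eq_neg_of_sq_eq_sq _ _ (by simpa using h1)
      · exact eq_or_eq_neg_of_sq_eq_sq _ _ (by simpa using h2)
      · congr 1
        ext i j
        fin_cases i <;> fin_cases j <;> simp [blockM]
    · rintro ⟨a, b, ha, hb, rfl⟩
      refine ⟨a, 0, 0, b, ?_, ?_, by simp, by simp, by simp, ?_⟩
      · rcases ha with rfl | rfl <;> simp
      · rcases hb with rfl | rfl <;> simp
      · congr 1
        ext i j
        fin_cases i <;> fin_cases j <;> simp [blockM]
  · intro d e hd he hde
    subst hde
    refine ⟨aut_eq d hd, (projHom K).range, psi K, ?_, ?_⟩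
    · rw [aut_eq d hd, range_eq]
    · exact ⟨(MonoidHom.ofInjective (projHom_injective K)).symm⟩
  · intro d e d' e' hd he hd' he'
    constructor
    · rintro ⟨M, c, hM, hc, H⟩
      obtain ⟨a, q, r, t, u, ha, -, h1, h2, h3, h4, h5, h6, h7⟩ :=
        of_semiconj d e d' e' hd he M hM c hc H
      have ha2 : a ^ 2 ≠ 0 := pow_ne_zero 2 ha
      by_cases hq : q = 0
      · right
        subst hq
        have ht : t ≠ 0 := by
          rintro rfl
          apply ha2
          rw [← h1]; ring
        have hu : u = 0 := by simpa [ht] using h3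
        subst hu
        have hr : r ≠ 0 := by
          rintro rfl
          apply ha2
          rw [← h2]; ring
        exact ⟨mul_right_cancel₀ hr h5, mul_right_cancel₀ ht h6⟩
      · by_cases hu : u = 0
        · right
          subst hu
          have hr : r = 0 := by simpa [hq] using h3
          subst hr
          exact absurd (by rw [← h2]; ring) ha2
        · left
          exact ⟨mul_right_cancel₀ hq h4, mul_right_cancel₀ hu h7⟩
    · rintro (⟨rfl, rfl⟩ | ⟨rfl, rfl⟩)
      · refine ⟨1, 1, by simp, one_ne_zero, fun v => by simp⟩
      · obtain ⟨i, hi⟩ := IsAlgClosed.exists_pow_nat_eq (-1 : K) (n := 2) (by norm_num)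
        refine ⟨blockM 1 0 i i 0, 1, ?_, one_ne_zero, ?_⟩
        · rw [det_blockM]
          have : (1 : K) * (0 * 0 - i * i) = 1 := by linear_combination -hi
          rw [this]
          exact one_ne_zero
        · exact semiconj_of _ _ _ _ 1 0 i i 0 (by rw [hi]; ring) (by rw [hi]; ring) (by ring)
            (by ring) rfl rfl (by ring)
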